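/- arXiv:math/0412255 — 3 statements merged into one kernel-verified Lean document; each statement's English description precedes it below -/
import Mathlib

section
/- Let H be a complex Hilbert space and D a bounded self-adjoint operator on H with ‖D‖ ≤ 1. Suppose there exist an integer n ≥ 2 and a real constant c < n such that for every ξ ∈ H one has Re⟪(1 − D^n)ξ, ξ⟫ ≤ c · Re⟪(1 − D)ξ, ξ⟫ (the Poincaré inequality E_n ≤ c·E). Then there exists κ < 1 such that every element z of the spectrum of D with z ≠ 1 satisfies Re z ≤ κ; in particular D has a spectral gap at 1. -/
open scoped InnerProductSpace

/-!
The idea is the factorization `1 - xⁿ = (1 + x + ⋯ + xⁿ⁻¹) (1 - x)`, whose first factor tends to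
`n` as `x → 1`. The Poincaré inequality says that `c (1 - D) - (1 - Dⁿ)` is positive, so by
spectral mapping `1 - xⁿ ≤ c (1 - x)` for every spectral value `x` of `D`. Dividing by `1 - x`
gives `1 + x + ⋯ + xⁿ⁻¹ ≤ c < n` when `x < 1`, which keeps `x` away from `1`.
-/

open Filter Polynomial Set Topology

section OrderedField

variable {𝕜 : Type*} [Field 𝕜] [LinearOrder 𝕜] [IsStrictOrderedRing 𝕜]
  [TopologicalSpace 𝕜] [OrderTopology 𝕜]

theorem eventually_lt_geom_sum_nhds_one {n : ℕ} {c : 𝕜} (hc : c < n) :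
    ∀ᶠ x in 𝓝 (1 : 𝕜), c < ∑ i ∈ Finset.range n, x ^ i := by
  have hcont : Continuous fun x : 𝕜 ↦ ∑ i ∈ Finset.range n, x ^ i := by fun_prop
  exact hcont.continuousAt.eventually_const_lt (by simpa using hc)

theorem eventually_mul_one_sub_lt_one_sub_pow {n : ℕ} {c : 𝕜} (hc : c < n) :
    ∀ᶠ x in 𝓝[<] (1 : 𝕜), c * (1 - x) < 1 - x ^ n := by
  filter_upwards [(eventually_lt_geom_sum_nhds_one hc).filter_mono nhdsWithin_le_nhds,
    self_mem_nhdsWithin] with x hsum hx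
  rw [← geom_sum_mul_neg]
  exact mul_lt_mul_of_pos_right hsum (sub_pos.mpr hx)

end OrderedField

section NonnegSpectrum

variable {𝕜 A : Type*} [Field 𝕜] [Ring A] [PartialOrder A] [Algebra 𝕜 A]

theorem eval_nonneg_of_aeval_nonneg [PartialOrder 𝕜] [NonnegSpectrumClass 𝕜 A] {a : A} {p : 𝕜[X]}
    (hp : 0 ≤ aeval a p) {x : 𝕜} (hx : x ∈ spectrum 𝕜 a) : 0 ≤ p.eval x :=
  spectrum_nonneg_of_nonneg hp (spectrum.subset_polynomial_aeval a p ⟨x, hx, rfl⟩)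

variable [LinearOrder 𝕜] [IsStrictOrderedRing 𝕜] [NonnegSpectrumClass 𝕜 A]

theorem one_sub_pow_le_mul_one_sub_of_mem_spectrum {a : A} {n : ℕ} {c : 𝕜}
    (ha : 0 ≤ c • (1 - a) - (1 - a ^ n)) {x : 𝕜} (hx : x ∈ spectrum 𝕜 a) :
    1 - x ^ n ≤ c * (1 - x) := by
  have haeval : aeval a (c • (1 - X) - (1 - X ^ n) : 𝕜[X]) = c • (1 - a) - (1 - a ^ n) := by
    simp only [map_sub, map_smul, map_one, map_pow, aeval_X]
  have heval := eval_nonneg_of_aeval_nonneg (ha.trans_eq haeval.symm) hx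
  simpa only [eval_sub, eval_smul, eval_one, eval_pow, eval_X, smul_eq_mul, sub_nonneg] using heval

theorem exists_lt_one_forall_mem_spectrum_le [TopologicalSpace 𝕜] [OrderTopology 𝕜] {a : A} {n : ℕ}
    {c : 𝕜} (hc : c < n) (ha : 0 ≤ c • (1 - a) - (1 - a ^ n)) :
    ∃ κ < 1, ∀ x ∈ spectrum 𝕜 a, x < 1 → x ≤ κ := by
  obtain ⟨κ, hκ, hgap⟩ :=
    mem_nhdsLT_iff_exists_Ioo_subset.mp (eventually_mul_one_sub_lt_one_sub_pow hc)
  refine ⟨κ, hκ, fun x hx hx1 ↦ ?_⟩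
  by_contra! hκx
  exact (hgap ⟨hκx, hx1⟩).not_ge (one_sub_pow_le_mul_one_sub_of_mem_spectrum ha hx)

end NonnegSpectrum

theorem re_lt_one_of_mem_spectrum {A : Type*} [CStarAlgebra A] {a : A} (ha : IsSelfAdjoint a)
    (hnorm : ‖a‖ ≤ 1) {z : ℂ} (hz : z ∈ spectrum ℂ a) (hz1 : z ≠ 1) : z.re < 1 := by
  have hle : z.re ≤ 1 := calc
    z.re ≤ ‖z‖ := z.re_le_norm
    _ ≤ ‖a‖ := IsometricContinuousFunctionalCalculus.norm_spectrum_le a hz ha.isStarNormal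
    _ ≤ 1 := hnorm
  refine hle.lt_of_ne fun hre ↦ hz1 ?_
  rw [ha.mem_spectrum_eq_re hz, hre, Complex.ofReal_one]

section HilbertSpace

variable {𝕜 H : Type*} [RCLike 𝕜] [NormedAddCommGroup H] [InnerProductSpace 𝕜 H] [CompleteSpace H]
  [Algebra ℝ (H →L[𝕜] H)] [IsScalarTower ℝ 𝕜 (H →L[𝕜] H)]

theorem smul_sub_nonneg_of_re_inner_le {S T : H →L[𝕜] H} (hS : IsSelfAdjoint S)
    (hT : IsSelfAdjoint T) {c : ℝ}
    (h : ∀ ξ, RCLike.re ⟪S ξ, ξ⟫_𝕜 ≤ c * RCLike.re ⟪T ξ, ξ⟫_𝕜) : 0 ≤ c • T - S := by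
  rw [← algebraMap_smul 𝕜 c T, RCLike.algebraMap_eq_ofReal,
    ContinuousLinearMap.nonneg_iff_isPositive, ContinuousLinearMap.isPositive_def']
  have hc : IsSelfAdjoint (c : 𝕜) := RCLike.conj_ofReal c
  refine ⟨(hc.smul hT).sub hS, fun ξ ↦ ?_⟩
  simpa only [ContinuousLinearMap.reApplyInnerSelf_apply, sub_apply,
    smul_apply, inner_sub_left, inner_smul_left, RCLike.conj_ofReal, map_sub,
    RCLike.re_ofReal_mul, sub_nonneg] using h ξ

theorem spectral_gap_of_poincare_inequality_general {D : H →L[𝕜] H} (hD : IsSelfAdjoint D)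
    {n : ℕ} {c : ℝ} (hc : c < n)
    (hpoin : ∀ ξ : H, RCLike.re ⟪(1 - D ^ n) ξ, ξ⟫_𝕜 ≤ c * RCLike.re ⟪(1 - D) ξ, ξ⟫_𝕜) :
    ∃ κ < 1, ∀ x ∈ spectrum ℝ D, x < 1 → x ≤ κ :=
  have hone : IsSelfAdjoint (1 : H →L[𝕜] H) := .one _
  exists_lt_one_forall_mem_spectrum_le hc <|
    smul_sub_nonneg_of_re_inner_le (hone.sub (hD.pow n)) (hone.sub hD) hpoin

end HilbertSpace

/-- Converse Poincaré inequality: if a self-adjoint contraction `D` satisfies, for some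
`n ≥ 2` and some constant `c < n`, the Poincaré inequality
`Re⟪(1 - Dⁿ)ξ, ξ⟫ ≤ c · Re⟪(1 - D)ξ, ξ⟫` for all `ξ`, then there is `κ < 1` bounding
`Re z` for every spectral value `z ≠ 1` of `D`: `D` has a spectral gap at `1`. -/
theorem spectral_gap_of_poincare_inequality
    {H : Type*} [NormedAddCommGroup H] [InnerProductSpace ℂ H] [CompleteSpace H]
    (D : H →L[ℂ] H) (hD : IsSelfAdjoint D) (hDnorm : ‖D‖ ≤ 1)
    (n : ℕ) (hn : 2 ≤ n) (c : ℝ) (hc : c < n)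
    (hpoin : ∀ ξ : H, (⟪(1 - D ^ n) ξ, ξ⟫_ℂ).re ≤ c * (⟪(1 - D) ξ, ξ⟫_ℂ).re) :
    ∃ κ : ℝ, κ < 1 ∧ ∀ z ∈ spectrum ℂ D, z ≠ 1 → z.re ≤ κ := by
  obtain ⟨κ, hκ, hgap⟩ := spectral_gap_of_poincare_inequality_general hD hc hpoin
  exact ⟨κ, hκ, fun z hz hz1 ↦
    hgap z.re (hD.spectrumRestricts.apply_mem hz) (re_lt_one_of_mem_spectrum hD hDnorm hz hz1)⟩
end

section
/- Let H be a complex Hilbert space and let Δ and T be bounded self-adjoint operators on H which commute (Δ∘T = T∘Δ). Assume Δ is positive (Re⟪Δξ, ξ⟫ ≥ 0 for all ξ) and injective. Then the operator Δ∘T is positive (Re⟪ΔTξ, ξ⟫ ≥ 0 for all ξ) if and only if T is positive (Re⟪Tξ, ξ⟫ ≥ 0 for all ξ). -/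
open scoped InnerProductSpace

/-!
Let `S` be the positive square root of `Δ`. It commutes with everything that commutes with `Δ`, so
`⟪Δ (T ξ), ξ⟫ = ⟪T (S ξ), S ξ⟫`: positivity of `Δ ∘ T` is positivity of the quadratic form of `T`
on the range of `S`. That range contains the range of `Δ`, which is dense because its orthogonal
complement is `ker Δ = 0`, and positivity of a continuous form passes to limits.
-/

section

variable {𝕜 E F : Type*} [RCLike 𝕜]
  [NormedAddCommGroup E] [InnerProductSpace 𝕜 E] [NormedAddCommGroup F] [InnerProductSpace 𝕜 F]

theorem denseRange_of_injective_adjoint [CompleteSpace E] [CompleteSpace F] {A : E →L[𝕜] F}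
    (hA : Function.Injective A.adjoint) : DenseRange A := by
  have range_orthogonal : A.rangeᗮ = ⊥ :=
    A.orthogonal_range.trans (LinearMap.ker_eq_bot.mpr hA)
  exact Submodule.dense_iff_topologicalClosure_eq_top.mpr
    (Submodule.topologicalClosure_eq_top_iff.mpr range_orthogonal)

theorem forall_re_inner_nonneg_iff_of_denseRange {ι : Type*} {e : ι → E} (he : DenseRange e)
    {f : E → E} (hf : Continuous f) :
    (∀ i, 0 ≤ RCLike.re ⟪f (e i), e i⟫_𝕜) ↔ ∀ x, 0 ≤ RCLike.re ⟪f x, x⟫_𝕜 := by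
  have isClosed_nonneg : IsClosed {x | 0 ≤ RCLike.re ⟪f x, x⟫_𝕜} :=
    isClosed_le continuous_const (by fun_prop)
  exact ⟨fun h x => he.induction_on x isClosed_nonneg h, fun h i => h (e i)⟩

theorem forall_re_inner_symmetric_sq_nonneg_iff_of_commute {S : E →ₗ[𝕜] E} (hS : S.IsSymmetric)
    (S_dense : DenseRange S) {f : E → E} (hf : Continuous f) (hSf : Function.Commute S f) :
    (∀ x, 0 ≤ RCLike.re ⟪S (S (f x)), x⟫_𝕜) ↔ ∀ x, 0 ≤ RCLike.re ⟪f x, x⟫_𝕜 := by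
  have inner_sq (x : E) : ⟪S (S (f x)), x⟫_𝕜 = ⟪f (S x), S x⟫_𝕜 := by
    rw [hS, hSf.eq]
  simp only [inner_sq]
  exact forall_re_inner_nonneg_iff_of_denseRange S_dense hf

end

theorem comp_positive_iff_positive_of_commute_general
    {H : Type*} [NormedAddCommGroup H] [InnerProductSpace ℂ H] [CompleteSpace H]
    (Δ T : H →L[ℂ] H) (hΔ : IsSelfAdjoint Δ)
    (hcomm : Δ ∘L T = T ∘L Δ)
    (hΔpos : ∀ ξ : H, 0 ≤ (⟪Δ ξ, ξ⟫_ℂ).re)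
    (hΔinj : Function.Injective Δ) :
    (∀ ξ : H, 0 ≤ (⟪Δ (T ξ), ξ⟫_ℂ).re) ↔ (∀ ξ : H, 0 ≤ (⟪T ξ, ξ⟫_ℂ).re) := by
  have Δ_nonneg : 0 ≤ Δ :=
    Δ.nonneg_iff_isPositive.mpr (ContinuousLinearMap.isPositive_def'.mpr ⟨hΔ, hΔpos⟩)
  set S : H →L[ℂ] H := CFC.sqrt Δ
  have S_symmetric : S.IsSymmetric := (CFC.sqrt_nonneg Δ).isSelfAdjoint.isSymmetric
  have S_sq (ξ : H) : S (S ξ) = Δ ξ := DFunLike.congr_fun (CFC.sqrt_mul_sqrt_self Δ Δ_nonneg) ξ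
  have S_commute : Function.Commute S T :=
    DFunLike.congr_fun (Commute.cfcₙ_nnreal (show Commute Δ T from hcomm) NNReal.sqrt).eq
  have S_dense : DenseRange S := by
    have Δ_dense : DenseRange Δ := denseRange_of_injective_adjoint (by rwa [hΔ.adjoint_eq])
    exact DenseRange.of_comp (g := S) ((funext S_sq : S ∘ S = Δ) ▸ Δ_dense)
  simp only [← S_sq]
  exact forall_re_inner_symmetric_sq_nonneg_iff_of_commute S_symmetric S_dense T.continuous
    S_commute

/-- For commuting bounded self-adjoint operators `Δ` and `T` on a complex Hilbert space,
with `Δ` positive and injective, the product `Δ ∘ T` is positive iff `T` is positive. -/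
theorem comp_positive_iff_positive_of_commute
    {H : Type*} [NormedAddCommGroup H] [InnerProductSpace ℂ H] [CompleteSpace H]
    (Δ T : H →L[ℂ] H) (hΔ : IsSelfAdjoint Δ) (hT : IsSelfAdjoint T)
    (hcomm : Δ ∘L T = T ∘L Δ)
    (hΔpos : ∀ ξ : H, 0 ≤ (⟪Δ ξ, ξ⟫_ℂ).re)
    (hΔinj : Function.Injective Δ) :
    (∀ ξ : H, 0 ≤ (⟪Δ (T ξ), ξ⟫_ℂ).re) ↔ (∀ ξ : H, 0 ≤ (⟪T ξ, ξ⟫_ℂ).re) :=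
  comp_positive_iff_positive_of_commute_general Δ T hΔ hcomm hΔpos hΔinj
end

section
/- Let (X, μ) be a probability space, p ≥ 1 a real number, η > 1 a real number, and f : X → [0, ∞) a measurable function such that ∫_X f^p dμ = 1 and ∫_{{f > η}} f^p dμ ≤ 1/2. Then μ({x : 1/η ≤ f(x) ≤ η}) ≥ (η^p − 2)/(2η^{2p} − 2). -/
open MeasureTheory

/-!
Raising to the power `p` turns the claim into one about `g = f ^ p` and `t = η ^ p` alone. Off the
tail `{t < g}`, the function `g` exceeds `t⁻¹` only on `A = {t⁻¹ ≤ g ≤ t}`, and there by at most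
`t - t⁻¹`. Hence `∫ g ≤ t⁻¹ μ(X) + (t - t⁻¹) μ(A) + ∫_{t < g} g`, which is solved for `μ(A)`.
-/

section LevelSets

variable {X : Type*} [MeasurableSpace X] {μ : Measure X} [IsFiniteMeasure μ] {g : X → ℝ}

theorem integral_le_measureReal_mem_Icc_add_setIntegral_lt {a : ℝ} (b : ℝ) (hg : Integrable g μ)
    (ha : 0 ≤ a) :
    ∫ x, g x ∂μ ≤ μ.real Set.univ * a + μ.real {x | g x ∈ Set.Icc a b} * (b - a)
      + ∫ x in {x | b < g x}, g x ∂μ := by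
  set A : Set X := {x | g x ∈ Set.Icc a b}
  set B : Set X := {x | b < g x}
  have hA : NullMeasurableSet A μ := hg.aemeasurable.nullMeasurableSet_preimage measurableSet_Icc
  have hB : NullMeasurableSet B μ := hg.aemeasurable.nullMeasurableSet_preimage measurableSet_Ioi
  have hAint : Integrable (A.indicator fun _ ↦ b - a) μ := (integrable_const _).indicator₀ hA
  have haAint : Integrable (fun x ↦ a + A.indicator (fun _ ↦ b - a) x) μ :=
    (integrable_const a).add hAint
  have hBint : Integrable (B.indicator g) μ := hg.indicator₀ hB
  have hbound (x : X) : g x ≤ a + A.indicator (fun _ ↦ b - a) x + B.indicator g x := by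
    rcases lt_or_ge b (g x) with hb | hb
    · simp [A, B, hb, hb.not_ge, ha]
    rcases lt_or_ge (g x) a with hxa | hxa
    · simp [A, B, hb.not_gt, hxa.not_ge, hxa.le]
    · simp [A, B, hb, hb.not_gt, hxa]
  calc ∫ x, g x ∂μ
      ≤ ∫ x, a + A.indicator (fun _ ↦ b - a) x + B.indicator g x ∂μ :=
        integral_mono hg (haAint.add hBint) hbound
    _ = μ.real Set.univ * a + μ.real A * (b - a) + ∫ x in B, g x ∂μ := by
        rw [integral_add haAint hBint, integral_add (integrable_const a) hAint,
          integral_indicator₀ hA, integral_indicator₀ hB, integral_const, setIntegral_const,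
          smul_eq_mul, smul_eq_mul]

theorem div_le_measureReal_mem_Icc_inv_self {t : ℝ} (hg : Integrable g μ) (ht : 1 < t) :
    ((∫ x, g x ∂μ - ∫ x in {x | t < g x}, g x ∂μ) * t - μ.real Set.univ) / (t ^ 2 - 1)
      ≤ μ.real {x | g x ∈ Set.Icc t⁻¹ t} := by
  have ht0 : 0 < t := one_pos.trans ht
  have hsplit := integral_le_measureReal_mem_Icc_add_setIntegral_lt t hg (inv_nonneg.2 ht0.le)
  rw [div_le_iff₀ (sub_pos.2 (one_lt_pow₀ ht two_ne_zero)), sub_le_iff_le_add']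
  calc (∫ x, g x ∂μ - ∫ x in {x | t < g x}, g x ∂μ) * t
      ≤ (μ.real Set.univ * t⁻¹ + μ.real {x | g x ∈ Set.Icc t⁻¹ t} * (t - t⁻¹)) * t := by
        gcongr
        exact sub_le_iff_le_add.2 hsplit
    _ = μ.real Set.univ + μ.real {x | g x ∈ Set.Icc t⁻¹ t} * (t ^ 2 - 1) := by
        field_simp

end LevelSets

theorem rpow_mem_Icc_inv_self_iff {p η y : ℝ} (hp : 0 < p) (hη : 0 < η) (hy : 0 ≤ y) :
    y ^ p ∈ Set.Icc (η ^ p)⁻¹ (η ^ p) ↔ 1 / η ≤ y ∧ y ≤ η := by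
  rw [Set.mem_Icc, ← Real.inv_rpow hη.le, ← one_div,
    Real.rpow_le_rpow_iff (one_div_nonneg.2 hη.le) hy hp, Real.rpow_le_rpow_iff hy hη.le hp]

theorem measure_mem_Icc_ge_of_integral_rpow_general
    {X : Type*} [MeasurableSpace X] {μ : Measure X} [IsFiniteMeasure μ]
    {p η τ : ℝ} (hp : 0 < p) (hη : 1 < η)
    {f : X → ℝ} (hf0 : 0 ≤ᵐ[μ] f) (hint : Integrable (fun x ↦ f x ^ p) μ)
    (htail : ∫ x in {x | η < f x}, f x ^ p ∂μ ≤ τ) :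
    ENNReal.ofReal (((∫ x, f x ^ p ∂μ - τ) * η ^ p - μ.real Set.univ) / (η ^ (2 * p) - 1))
      ≤ μ {x | 1 / η ≤ f x ∧ f x ≤ η} := by
  have hη0 : 0 < η := one_pos.trans hη
  have ht : 1 < η ^ p := Real.one_lt_rpow hη hp
  have hsq : η ^ (2 * p) = (η ^ p) ^ 2 := by rw [two_mul, Real.rpow_add hη0, sq]
  have hmid : {x | f x ^ p ∈ Set.Icc (η ^ p)⁻¹ (η ^ p)} =ᵐ[μ] {x | 1 / η ≤ f x ∧ f x ≤ η} :=
    hf0.mono fun x hx ↦ propext (rpow_mem_Icc_inv_self_iff hp hη0 hx)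
  have hupper : {x | η ^ p < f x ^ p} =ᵐ[μ] {x | η < f x} :=
    hf0.mono fun x hx ↦ propext (Real.rpow_lt_rpow_iff hη0.le hx hp)
  have hmass := div_le_measureReal_mem_Icc_inv_self hint ht
  rw [setIntegral_congr_set hupper, measureReal_congr hmid, ← hsq] at hmass
  have hden : 0 ≤ η ^ (2 * p) - 1 := by
    rw [hsq]
    exact sub_nonneg.2 (one_le_pow₀ ht.le)
  refine ENNReal.ofReal_le_of_le_toReal (le_trans ?_ hmass)
  gcongr

/-- Quantitative mass bound: if `f ≥ 0`, `∫ f^p dμ = 1` and `∫_{f > η} f^p dμ ≤ 1/2`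
(with `p ≥ 1`, `η > 1`, `μ` a probability measure), then
`μ{1/η ≤ f ≤ η} ≥ (η^p − 2)/(2η^{2p} − 2)`. -/
theorem measure_mem_Icc_ge_of_integral_rpow
    {X : Type*} [MeasurableSpace X] (μ : Measure X) [IsProbabilityMeasure μ]
    (p η : ℝ) (hp : 1 ≤ p) (hη : 1 < η)
    (f : X → ℝ) (hf : Measurable f) (hf0 : ∀ x, 0 ≤ f x)
    (hint : ∫ x, f x ^ p ∂μ = 1)
    (htail : ∫ x in {x | η < f x}, f x ^ p ∂μ ≤ 1 / 2) :
    ENNReal.ofReal ((η ^ p - 2) / (2 * η ^ (2 * p) - 2))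
      ≤ μ {x | 1 / η ≤ f x ∧ f x ≤ η} := by
  convert measure_mem_Icc_ge_of_integral_rpow_general (one_pos.trans_le hp) hη (ae_of_all μ hf0)
    (.of_integral_ne_zero (hint.trans_ne one_ne_zero)) htail using 2
  rw [hint, probReal_univ, ← mul_div_mul_left _ (η ^ (2 * p) - 1) (two_ne_zero' ℝ)]
  ring_nf
end
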